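/- For every nonempty finite sequence L of positive real numbers, there exists a single valid partition of L that simultaneously (i) has last-block total equal to y_n, the minimum possible last-block total over all valid partitions of L, and (ii) has the maximum possible number of blocks over all valid partitions of L. -/

import Mathlib

/-- `pSum L i` is `x_i`: the sum of the first `i` elements of `L` (so `pSum L 0 = 0`). -/
def pSum (L : List ℝ) (i : ℕ) : ℝ := (L.take i).sum

/-- A valid partition of `L`: a partition of `L` into nonempty consecutive blocks
whose totals are non-decreasing from left to right. -/
def ValidPartition (L : List ℝ) (P : List (List ℝ)) : Prop :=
  P.flatten = L ∧ (∀ B ∈ P, B ≠ []) ∧ List.Chain' (· ≤ ·) (P.map List.sum)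

/-- The total of the last block of a partition (`0` for the empty partition). -/
def lastTotal (P : List (List ℝ)) : ℝ := (P.map List.sum).getLastD 0

/-- `wrapLen L` is the wrapping length `y_{|L|}`: the minimum, over all valid
partitions of `L`, of the total of the last block (with `wrapLen [] = 0`,
realized by the empty partition). -/
noncomputable def wrapLen (L : List ℝ) : ℝ :=
  sInf {t | ∃ P, ValidPartition L P ∧ lastTotal P = t}

theorem valid_concat (L : List ℝ) (Q : List (List ℝ)) (B : List ℝ) :
    ValidPartition L (Q ++ [B]) ↔ ValidPartition Q.flatten Q ∧ B ≠ [] ∧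
      (Q ≠ [] → lastTotal Q ≤ B.sum) ∧ Q.flatten ++ B = L := by
  rcases List.eq_nil_or_concat' Q with rfl | ⟨R, D, rfl⟩
  · simp [ValidPartition, List.Chain']
    tauto
  · have h1 : lastTotal (R ++ [D]) = D.sum := by simp [lastTotal]
    rw [h1]
    unfold ValidPartition List.Chain'
    rw [List.map_append (l₁ := R ++ [D]), List.isChain_append]
    simp
    constructor
    · rintro ⟨h, h2, h3, h4⟩
      refine ⟨⟨fun B hB => h2 B (by tauto), h3⟩, ?_, h4, h⟩
      exact h2 B (by tauto)
    · rintro ⟨⟨h, h2⟩, h3, h4, h5⟩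
      refine ⟨h5, ?_, h2, h4⟩
      rintro B' (h6 | h6 | h6)
      · exact h _ (Or.inl h6)
      · exact h _ (Or.inr h6)
      · exact h6 ▸ h3

theorem lastTotal_concat (Q : List (List ℝ)) (B : List ℝ) :
    lastTotal (Q ++ [B]) = B.sum := by simp [lastTotal]

theorem extend_valid (A C : List ℝ) (hC : ∀ l ∈ C, 0 < l) (P : List (List ℝ))
    (hP : ValidPartition A P) :
    P = [] ∨ ∃ P1, ValidPartition (A ++ C) P1 ∧ P.length = P1.length := by
  rcases List.eq_nil_or_concat' P with rfl | ⟨R, D, rfl⟩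
  · simp
  · right
    rw [valid_concat] at hP
    obtain ⟨h1, h2, h3, h4⟩ := hP
    have hs : 0 ≤ C.sum := List.sum_nonneg fun x hx => (hC x hx).le
    refine ⟨R ++ [D ++ C], ?_, by simp⟩
    rw [valid_concat]
    refine ⟨h1, by simp [h2], fun h => ?_, by rw [← h4]; simp⟩
    have := h3 h
    rw [List.sum_append]; linarith

theorem exists_opt (n : ℕ) : ∀ L : List ℝ, L.length = n → (∀ l ∈ L, 0 < l) →
    ∃ P, ValidPartition L P ∧ ∀ P', ValidPartition L P' →
      lastTotal P ≤ lastTotal P' ∧ P'.length ≤ P.length := by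
  induction n using Nat.strong_induction_on with
  | _ n ih =>
  intro L hn hL
  by_cases hne : L = []
  · subst hne
    refine ⟨[], by simp [ValidPartition, List.Chain'], ?_⟩
    rintro P' ⟨h1, h2, -⟩
    cases P' with
    | nil => simp
    | cons B P' =>
      simp at h1
      exact absurd h1.1 (h2 B (by simp))
  classical
  have hex : ∃ m, ∃ Q B, ValidPartition L (Q ++ [B]) ∧ B.length = m := by
    refine ⟨L.length, [], L, ?_, rfl⟩
    rw [valid_concat]
    simp [ValidPartition, List.Chain', hne]
  obtain ⟨Q, B, hQB, hlen⟩ := Nat.find_spec hex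
  have hmin : ∀ Q' B', ValidPartition L (Q' ++ [B']) → B.length ≤ B'.length := by
    intro Q' B' h
    rw [hlen]
    exact Nat.find_min' hex ⟨Q', B', h, rfl⟩
  rw [valid_concat] at hQB
  obtain ⟨h1, h2, h3, h4⟩ := hQB
  have hBpos : 0 < B.length := List.length_pos_iff.2 h2
  have hlt : Q.flatten.length < n := by
    rw [← hn, ← h4, List.length_append]; omega
  have hApos : ∀ l ∈ Q.flatten, 0 < l := fun l hl =>
    hL l (by rw [← h4]; exact List.mem_append_left _ hl)
  have hB0 : ∀ l ∈ B, 0 < l := fun l hl =>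
    hL l (by rw [← h4]; exact List.mem_append_right _ hl)
  obtain ⟨S, hS, hopt⟩ := ih _ hlt Q.flatten rfl hApos
  refine ⟨S ++ [B], ?_, ?_⟩
  · rw [valid_concat, hS.1]
    refine ⟨hS, h2, fun _ => ?_, h4⟩
    have h5 := (hopt Q h1).1
    by_cases hQ : Q = []
    · subst hQ
      have : 0 ≤ B.sum := List.sum_nonneg fun x hx => (hB0 x hx).le
      simp [lastTotal] at h5
      simp [lastTotal]
      linarith
    · exact h5.trans (h3 hQ)
  · intro P' hP'
    rcases List.eq_nil_or_concat' P' with rfl | ⟨R, D, rfl⟩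
    · exact absurd hP'.1.symm (by simpa using hne)
    have hle := hmin R D hP'
    rw [valid_concat] at hP'
    obtain ⟨k1, k2, k3, k4⟩ := hP'
    have hsuf : B <:+ D := List.suffix_of_suffix_length_le
      (⟨_, h4⟩ : B <:+ L) ⟨_, k4⟩ hle
    obtain ⟨C, rfl⟩ := hsuf
    have hC : ∀ l ∈ C, 0 < l := fun l hl => hL l (by rw [← k4]; simp [hl])
    have hA : R.flatten ++ C = Q.flatten := by
      rw [← h4, ← List.append_assoc] at k4
      exact List.append_cancel_right k4
    have hs : 0 ≤ C.sum := List.sum_nonneg fun x hx => (hC x hx).le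
    rw [lastTotal_concat, lastTotal_concat, List.sum_append]
    refine ⟨by linarith, ?_⟩
    rcases extend_valid _ C hC R k1 with rfl | ⟨P1, hP1, hl⟩
    · simp
    · rw [hA] at hP1
      have := (hopt P1 hP1).2
      simp; omega



/-- For every nonempty finite sequence `L` of positive reals, there
is a single valid partition of `L` that simultaneously (i) has last-block total
equal to `y_n`, the minimum possible last-block total over all valid partitions
of `L`, and (ii) has the maximum possible number of blocks over all valid
partitions of `L`. -/
theorem stmt_8 (L : List ℝ) (hL : ∀ l ∈ L, 0 < l) (hne : L ≠ []) :
    ∃ P, ValidPartition L P ∧ lastTotal P = wrapLen L ∧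
      ∀ P', ValidPartition L P' → P'.length ≤ P.length := by
  obtain ⟨P, hP, h⟩ := exists_opt _ L rfl hL
  refine ⟨P, hP, ?_, fun P1 h1 => (h P1 h1).2⟩
  symm
  refine IsLeast.csInf_eq ⟨⟨P, hP, rfl⟩, ?_⟩
  rintro t ⟨P1, h1, rfl⟩
  exact (h P1 h1).1
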